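/- arXiv:q-alg/9703003 — 3 statements merged into one kernel-verified Lean document; each statement's English description precedes it below -/
import Mathlib

section
/- Let D be a division ring, q a nonzero central element of D, and let (z_{rs}) with r ∈ {1,2,3} and s ∈ {1,2} be a 3×2 quantum matrix over D (its entries satisfy the relations Rel_q) with z_{11} ≠ 0. Set A = z_{22} − z_{21} z_{11}^{-1} z_{12} and C = z_{32} − z_{31} z_{11}^{-1} z_{12}. Then CA = qAC. -/
/-- The relations `Rel_q` of the ring of quantum matrices `M_q(n)` (allowing
rectangular families). -/
def IsQuantumMatrix {D : Type*} [DivisionRing D] (q : D) {m n : ℕ}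
    (z : Fin m → Fin n → D) : Prop :=
  (∀ (i : Fin m) (k l : Fin n), k < l → z i l * z i k = q * (z i k * z i l)) ∧
  (∀ (i j : Fin m) (k : Fin n), i < j → z j k * z i k = q * (z i k * z j k)) ∧
  (∀ (i j : Fin m) (k l : Fin n), i < j → k < l → z i l * z j k = z j k * z i l) ∧
  (∀ (i j : Fin m) (k l : Fin n), i < j → k < l →
    z j l * z i k - z i k * z j l = (q⁻¹ - q) * (z i l * z j k))

theorem aux_main {K D : Type*} [Field K] [DivisionRing D] [Algebra K D] (Q s : K) (hQ : Q ≠ 0)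
    (a b c d e f : D) (ha : a ≠ 0)
    (hs : s = Q - Q⁻¹ ∨ (s = Q⁻¹ - Q))
    (ba : b * a = Q • (a * b)) (dc : d * c = Q • (c * d)) (fe : f * e = Q • (e * f))
    (ca : c * a = Q • (a * c)) (ea : e * a = Q • (a * e)) (ec : e * c = Q • (c * e))
    (db : d * b = Q • (b * d)) (fb : f * b = Q • (b * f)) (fd : f * d = Q • (d * f))
    (cb : c * b = b * c) (eb : e * b = b * e) (ed : e * d = d * e)
    (da : d * a = a * d + s • (b * c)) (fa : f * a = a * f + s • (b * e))
    (fc : f * c = c * f + s • (d * e)) :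
    (f - e * a⁻¹ * b) * (d - c * a⁻¹ * b) = Q • ((d - c * a⁻¹ * b) * (f - e * a⁻¹ * b)) := by
  have L : ∀ {x y u : D}, x * y = Q • u → ∀ w, x * (y * w) = Q • (u * w) := by
    intro x y u h w; rw [← mul_assoc, h, smul_mul_assoc]
  have L1 : ∀ {x y u : D}, x * y = u → ∀ w, x * (y * w) = u * w := by
    intro x y u h w; rw [← mul_assoc, h]
  have key : (s = Q - Q⁻¹) ∨ b = 0 ∨ c = 0 ∨ e = 0 := by
    have h1 : (f * c) * a = f * (c * a) := mul_assoc _ _ _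
    have h2 : (s * (1 + s * Q - Q ^ 2)) • (b * (c * e)) = 0 := by
      have h3 : (f * c) * a - f * (c * a) = (s * (1 + s * Q - Q ^ 2)) • (b * (c * e)) := by
        simp only [fc, ca, add_mul, mul_add, smul_mul_assoc, mul_smul_comm, smul_add, smul_smul, mul_assoc, fa, ea,
          L ca, L1 da, L1 fa, L1 cb, ec, L1 fc]
        match_scalars <;> ring
      rw [← h3, h1, sub_self]
    rcases smul_eq_zero.1 h2 with h | h
    · left
      rcases mul_eq_zero.1 h with h | h
      · rcases hs with hs | hs
        · exact hs
        · rw [h] at hs ⊢; rw [← neg_sub, ← hs, neg_zero]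
      · field_simp
        linear_combination h
    · right; simpa using h
  rcases key with hs | h | h | h
  · have T : ∀ {x : D}, x * a = Q • (a * x) → a⁻¹ * x = Q • (x * a⁻¹) := by
      intro x h
      apply mul_right_cancel₀ ha
      rw [mul_assoc, h, mul_smul_comm, inv_mul_cancel_left₀ ha, smul_mul_assoc,
        inv_mul_cancel_right₀ ha]
    have tb := T ba
    have tc := T ca
    have te := T ea
    have T2 : ∀ {x y : D}, y * a = Q • (a * y) → x * a = a * x + s • (b * y) →
        a⁻¹ * x = x * a⁻¹ + (s * Q ^ 2) • (b * (y * (a⁻¹ * a⁻¹))) := by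
      intro x y hy h
      apply mul_right_cancel₀ ha
      have ty := T hy
      rw [mul_assoc, h, mul_add, inv_mul_cancel_left₀ ha, add_mul, inv_mul_cancel_right₀ ha]
      simp only [smul_mul_assoc, mul_smul_comm, mul_assoc, L tb, ty, inv_mul_cancel₀ ha, mul_one, smul_smul]
      congr 2
      ring
    have td := T2 ca da
    have tf := T2 ea fa
    clear T T2 ba ca ea da fa
    generalize a⁻¹ = t at *
    subst hs
    simp only [mul_sub, sub_mul, add_mul, mul_add, smul_mul_assoc, mul_smul_comm, smul_add,
      smul_sub, smul_smul, mul_assoc,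
      tb, tc, te, td, tf, dc, fe, ec, db, fb, fd, cb, eb, ed, fc,
      L tb, L tc, L te, L1 td, L1 tf, L dc, L fe, L ec, L db, L fb, L fd, L1 cb, L1 eb, L1 ed, L1 fc]
    match_scalars <;> field_simp <;> ring
  · simp [h, fd]
  · subst h
    simp only [zero_mul, sub_zero, mul_zero, smul_zero, add_zero, zero_add] at *
    have hat : a⁻¹ * d = d * a⁻¹ := (Commute.inv_right₀ (show Commute d a from da)).eq.symm
    rcases smul_eq_zero.1 fc.symm with h | h
    · have hQ2 : Q⁻¹ = Q := by
        rcases hs with hs | hs <;> rw [h] at hs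
        · exact (sub_eq_zero.1 hs.symm).symm
        · exact (sub_eq_zero.1 hs.symm)
      have bd : b * d = Q • (d * b) := by
        rw [db, smul_smul]; nth_rw 1 [← hQ2]; rw [inv_mul_cancel₀ hQ, one_smul]
      simp only [mul_sub, sub_mul, smul_sub, fd, mul_assoc, bd, mul_smul_comm, L1 hat, L1 ed]
    · rcases mul_eq_zero.1 h with h | h <;> simp [h, fd]
  · subst h
    simp only [zero_mul, sub_zero, mul_zero, smul_zero, add_zero, zero_add] at *
    have hat : f * a⁻¹ = a⁻¹ * f := (Commute.inv_right₀ (show Commute f a from fa)).eq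
    simp only [mul_sub, sub_mul, smul_sub, fd, mul_assoc, fb, mul_smul_comm, L1 hat, L1 fc]

/-- Lemma `CA = qAC` for the row-reduced entries
`A = z₂₂ - z₂₁ z₁₁⁻¹ z₁₂` and `C = z₃₂ - z₃₁ z₁₁⁻¹ z₁₂` of a `3 × 2`
quantum matrix with `z₁₁ ≠ 0`. -/
theorem row_reduced_CA_eq_qAC {D : Type*} [DivisionRing D] (q : D)
    (hq : q ≠ 0) (hqc : ∀ x : D, q * x = x * q)
    (z : Fin 3 → Fin 2 → D) (hz : IsQuantumMatrix q z) (h11 : z 0 0 ≠ 0) :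
    (z 2 1 - z 2 0 * (z 0 0)⁻¹ * z 0 1) * (z 1 1 - z 1 0 * (z 0 0)⁻¹ * z 0 1) =
      q * ((z 1 1 - z 1 0 * (z 0 0)⁻¹ * z 0 1) *
        (z 2 1 - z 2 0 * (z 0 0)⁻¹ * z 0 1)) := by
  obtain ⟨h1, h2, h3, h4⟩ := hz
  have hm : q ∈ Subring.center D := Subring.mem_center_iff.2 fun g => (hqc g).symm
  let Q : Subring.center D := ⟨q, hm⟩
  have hQ : Q ≠ 0 := fun h => hq (congrArg Subtype.val h)
  have hsm : ∀ x : D, Q • x = q * x := fun x => rfl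
  have hsv : ∀ x : D, (Q⁻¹ - Q) • x = (q⁻¹ - q) * x := fun x => by
    rw [sub_smul, sub_mul, hsm]
    congr 1
  rw [← hsm]
  have l01 : (0 : Fin 2) < 1 := by decide
  have k01 : (0 : Fin 3) < 1 := by decide
  have k02 : (0 : Fin 3) < 2 := by decide
  have k12 : (1 : Fin 3) < 2 := by decide
  have h4' : ∀ i j : Fin 3, i < j →
      z j 1 * z i 0 = z i 0 * z j 1 + (Q⁻¹ - Q) • (z i 1 * z j 0) := by
    intro i j hij
    rw [hsv, ← h4 i j 0 1 hij l01]; abel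
  exact aux_main Q (Q⁻¹ - Q) hQ _ _ _ _ _ _ h11 (Or.inr rfl)
    (h1 0 0 1 l01) (h1 1 0 1 l01) (h1 2 0 1 l01)
    (h2 0 1 0 k01) (h2 0 2 0 k02) (h2 1 2 0 k12)
    (h2 0 1 1 k01) (h2 0 2 1 k02) (h2 1 2 1 k12)
    (h3 0 1 0 1 k01 l01).symm (h3 0 2 0 1 k02 l01).symm (h3 1 2 0 1 k12 l01).symm
    (h4' 0 1 k01) (h4' 0 2 k02) (h4' 1 2 k12)
end

section
/- Let D be a division ring, q a nonzero central element of D, and n ≥ 2. Let z = (z_{ij})_{1≤i,j≤n} be a quantum matrix over D with z_{11} ≠ 0, and let z' be its row reduction: z'_{1j} = z_{1j} for all j, z'_{i1} = 0 for i ≥ 2, and z'_{ij} = z_{ij} − z_{i1} z_{11}^{-1} z_{1j} for i, j ≥ 2. Then the quantum determinants agree: det_q(z') = det_q(z). -/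
/-- The number of inversions (the length) of a permutation. -/
def inversions {n : ℕ} (σ : Equiv.Perm (Fin n)) : ℕ :=
  (Finset.univ.filter (fun x : Fin n × Fin n => x.1 < x.2 ∧ σ x.2 < σ x.1)).card

/-- The quantum determinant
`det_q(z) = Σ_{σ} (-q⁻¹)^{ℓ(σ)} z_{1σ(1)} z_{2σ(2)} ⋯ z_{nσ(n)}`,
with the (noncommutative) product taken in increasing row order. -/
def qdet {D : Type*} [DivisionRing D] (q : D) {n : ℕ}
    (z : Fin n → Fin n → D) : D :=
  ∑ σ : Equiv.Perm (Fin n),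
    (-q⁻¹) ^ inversions σ * (List.ofFn fun i => z i (σ i)).prod

theorem inversions_swap {n : ℕ} (σ : Equiv.Perm (Fin n)) (t t' : Fin n)
    (ht : t'.val = t.val + 1) (h : σ t < σ t') :
    inversions (σ * Equiv.swap t t') = inversions σ + 1 := by
  classical
  unfold inversions
  have hS : (Finset.univ.filter (fun x : Fin n × Fin n => x.1 < x.2 ∧
      (σ * Equiv.swap t t') x.2 < (σ * Equiv.swap t t') x.1)) =
      insert (t, t') ((Finset.univ.filter (fun x : Fin n × Fin n => x.1 < x.2 ∧
        σ x.2 < σ x.1)).map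
        ((Equiv.swap t t').prodCongr (Equiv.swap t t')).toEmbedding) := by
    ext ⟨x, y⟩
    rw [Finset.mem_filter, Finset.mem_insert, Finset.mem_map_equiv, Finset.mem_filter]
    simp only [Finset.mem_univ, true_and, Equiv.prodCongr_symm, Equiv.symm_swap, Equiv.prodCongr_apply,
      Prod.map, Equiv.Perm.mul_apply, Prod.mk.injEq]
    have htt : t < t' := by rw [Fin.lt_def]; omega
    have key : (x = t ∧ y = t') ∨ (x = t' ∧ y = t) ∨
        ((x < y) ↔ (Equiv.swap t t' x < Equiv.swap t t' y)) := by
      rw [Equiv.swap_apply_def, Equiv.swap_apply_def]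
      clear h
      split_ifs <;> simp only [Fin.lt_def, Fin.ext_iff] at * <;> first | omega | simp
    rcases key with ⟨rfl, rfl⟩ | ⟨rfl, rfl⟩ | key
    · simp [htt, h]
    · simp [htt.not_gt, htt.ne', h.not_gt]
    · rw [key]
      constructor
      · exact Or.inr
      · rintro (⟨rfl, rfl⟩ | h1)
        · simp [htt.not_gt, htt] at key
        · exact h1
  rw [hS, Finset.card_insert_of_notMem, Finset.card_map]
  have htt : t < t' := by rw [Fin.lt_def]; omega
  simp only [Finset.mem_map_equiv, Finset.mem_filter]
  simp [htt.not_gt]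

theorem prod_split2 {D : Type*} [DivisionRing D] {n : ℕ} (t t' : Fin n)
    (ht : t'.val = t.val + 1) :
    ∃ A B : (Fin n → D) → D,
      (∀ f, (List.ofFn f).prod = A f * (f t * f t') * B f) ∧
      (∀ f g : Fin n → D, (∀ r, r ≠ t → r ≠ t' → f r = g r) → A f = A g ∧ B f = B g) := by
  refine ⟨fun f => ((List.ofFn f).take t.val).prod,
    fun f => ((List.ofFn f).drop (t.val + 2)).prod, ?_, ?_⟩
  · intro f
    have h1 := List.prod_take_mul_prod_drop (List.ofFn f) t.val
    rw [← h1, List.drop_eq_getElem_cons (by simp), List.drop_eq_getElem_cons (by simp; omega)]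
    have : (⟨t.val + 1, by omega⟩ : Fin n) = t' := by ext; simp [ht]
    simp [this, mul_assoc]
  · intro f g h
    constructor
    · refine congrArg List.prod ?_
      apply List.ext_getElem
      · simp
      · intro i h1 h2
        simp at h1
        simp only [List.getElem_take, List.getElem_ofFn]
        apply h <;> simp [Fin.ext_iff] <;> omega
    · refine congrArg List.prod ?_
      apply List.ext_getElem
      · simp
      · intro i h1 h2
        simp at h1
        simp only [List.getElem_drop, List.getElem_ofFn]
        apply h <;> simp [Fin.ext_iff] <;> omega

theorem prod_split1 {D : Type*} [DivisionRing D] {n : ℕ} (t : Fin n) :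
    ∃ A B : (Fin n → D) → D,
      (∀ f, (List.ofFn f).prod = A f * f t * B f) ∧
      (∀ f g : Fin n → D, (∀ r, r ≠ t → f r = g r) → A f = A g ∧ B f = B g) := by
  refine ⟨fun f => ((List.ofFn f).take t.val).prod,
    fun f => ((List.ofFn f).drop (t.val + 1)).prod, ?_, ?_⟩
  · intro f
    have h1 := List.prod_take_mul_prod_drop (List.ofFn f) t.val
    rw [← h1, List.drop_eq_getElem_cons (by simp)]
    simp [mul_assoc]
  · intro f g h
    constructor
    · refine congrArg List.prod ?_
      apply List.ext_getElem
      · simp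
      · intro i h1 h2
        simp at h1
        simp only [List.getElem_take, List.getElem_ofFn]
        apply h; simp [Fin.ext_iff]; omega
    · refine congrArg List.prod ?_
      apply List.ext_getElem
      · simp
      · intro i h1 h2
        simp at h1
        simp only [List.getElem_drop, List.getElem_ofFn]
        apply h; simp [Fin.ext_iff]; omega

theorem qdet_sub_row {D : Type*} [DivisionRing D] (q : D) {n : ℕ}
    (u v w : Fin n → Fin n → D) (t : Fin n)
    (h1 : ∀ r, r ≠ t → u r = v r) (h2 : ∀ r, r ≠ t → w r = v r)
    (h : ∀ k, u t k = v t k - w t k) : qdet q u = qdet q v - qdet q w := by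
  obtain ⟨A, B, hp, hc⟩ := prod_split1 (D := D) t
  unfold qdet
  rw [← Finset.sum_sub_distrib]
  refine Finset.sum_congr rfl fun σ _ => ?_
  obtain ⟨a1, b1⟩ := hc (fun i => u i (σ i)) (fun i => v i (σ i)) (fun r hr => by simp [h1 r hr])
  obtain ⟨a2, b2⟩ := hc (fun i => w i (σ i)) (fun i => v i (σ i)) (fun r hr => by simp [h2 r hr])
  rw [hp, hp, hp, a1, a2, b1, b2, h]
  noncomm_ring

theorem qdet_adj {D : Type*} [DivisionRing D] (q : D) (hqc : ∀ x : D, q * x = x * q)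
    {n : ℕ} (w w' : Fin n → Fin n → D) (t t' : Fin n) (ht : t'.val = t.val + 1)
    (hr : ∀ r, r ≠ t → r ≠ t' → w r = w' r)
    (hm : ∀ k l, k < l → w t k * w t' l - q⁻¹ * (w t l * w t' k)
      = w' t k * w' t' l - q⁻¹ * (w' t l * w' t' k)) : qdet q w = qdet q w' := by
  obtain ⟨A, B, hp, hc⟩ := prod_split2 (D := D) t t' ht
  have htt : t ≠ t' := by intro h; rw [h] at ht; omega
  have hcen : ∀ x : D, q⁻¹ * x = x * q⁻¹ := fun x => (Commute.inv_left₀ (show Commute q x from hqc x)).eq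
  rw [← sub_eq_zero]
  unfold qdet
  rw [← Finset.sum_sub_distrib]
  have pair : ∀ σ : Equiv.Perm (Fin n), σ t < σ t' →
     ((-q⁻¹) ^ inversions σ * (List.ofFn fun i => w i (σ i)).prod -
      (-q⁻¹) ^ inversions σ * (List.ofFn fun i => w' i (σ i)).prod) +
     ((-q⁻¹) ^ inversions (σ * Equiv.swap t t') *
        (List.ofFn fun i => w i ((σ * Equiv.swap t t') i)).prod -
      (-q⁻¹) ^ inversions (σ * Equiv.swap t t') *
        (List.ofFn fun i => w' i ((σ * Equiv.swap t t') i)).prod) = 0 := by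
    intro σ hσ
    obtain ⟨a1, b1⟩ := hc (fun i => w i (σ i)) (fun i => w' i (σ i))
      (fun r h1 h2 => by simp [hr r h1 h2])
    obtain ⟨a2, b2⟩ := hc (fun i => w i ((σ * Equiv.swap t t') i)) (fun i => w' i (σ i))
      (fun r h1 h2 => by simp [hr r h1 h2, Equiv.swap_apply_of_ne_of_ne h1 h2])
    obtain ⟨a3, b3⟩ := hc (fun i => w' i ((σ * Equiv.swap t t') i)) (fun i => w' i (σ i))
      (fun r h1 h2 => by simp [Equiv.swap_apply_of_ne_of_ne h1 h2])
    rw [hp, hp, hp, hp, a1, a2, a3, b1, b2, b3, inversions_swap σ t t' ht hσ]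
    simp only [Equiv.Perm.mul_apply, Equiv.swap_apply_left, Equiv.swap_apply_right]
    have h := hm _ _ hσ
    generalize A (fun i => w' i (σ i)) = a
    generalize B (fun i => w' i (σ i)) = b
    rw [pow_succ]
    generalize (-q⁻¹) ^ inversions σ = p
    have e : ∀ X : D, p * (-q⁻¹) * (a * X * b) = - (p * (a * (q⁻¹ * X) * b)) := by
      intro X
      rw [← mul_assoc a q⁻¹ X, ← hcen a]
      noncomm_ring
    rw [e, e]
    have h2 : p * (a * ((w t (σ t) * w t' (σ t') - q⁻¹ * (w t (σ t') * w t' (σ t)))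
      - (w' t (σ t) * w' t' (σ t') - q⁻¹ * (w' t (σ t') * w' t' (σ t)))) * b) = 0 := by
      rw [h]; simp
    rw [← h2]
    noncomm_ring
  refine Finset.sum_involution (fun σ _ => σ * Equiv.swap t t') ?_ ?_ ?_ ?_
  · intro σ _
    rcases lt_or_gt_of_ne (fun h => htt (σ.injective h) : σ t ≠ σ t') with h | h
    · exact pair σ h
    · have := pair (σ * Equiv.swap t t') (by simpa using h)
      rw [mul_assoc, Equiv.swap_mul_self, mul_one] at this
      rw [add_comm]; exact this
  · intro σ _ _ h
    have := congrArg (fun s : Equiv.Perm (Fin n) => s t) h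
    simp at this
    exact htt this.symm
  · intros; exact Finset.mem_univ _
  · intro σ _
    simp [mul_assoc]

theorem qdet_row_zero {D : Type*} [DivisionRing D] (q : D) {n : ℕ}
    (w : Fin n → Fin n → D) (t : Fin n) (h : ∀ k, w t k = 0) : qdet q w = 0 := by
  unfold qdet
  refine Finset.sum_eq_zero fun σ _ => ?_
  rw [List.prod_eq_zero, mul_zero]
  rw [List.mem_ofFn]
  exact ⟨t, h _⟩

section alg
variable {K D : Type*} [Field K] [DivisionRing D] [Algebra K D]

theorem inv_comm_aux (Q : K) (hQ : Q ≠ 0) (a x : D) (ha : a ≠ 0) (h : x * a = Q • (a * x)) :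
    x * a⁻¹ = Q⁻¹ • (a⁻¹ * x) := by
  have h1 : a⁻¹ * (x * a) * a⁻¹ = a⁻¹ * (Q • (a * x)) * a⁻¹ := by rw [h]
  have h2 : a⁻¹ * x = Q • (x * a⁻¹) := by
    calc a⁻¹ * x = a⁻¹ * (x * a) * a⁻¹ := by
          rw [mul_assoc, mul_assoc x, mul_inv_cancel₀ ha, mul_one]
      _ = _ := by
          rw [h1, mul_smul_comm, smul_mul_assoc, inv_mul_cancel_left₀ ha]
  rw [h2, smul_smul, inv_mul_cancel₀ hQ, one_smul]

theorem algH (Q N : K) (hQ : Q ≠ 0) (a x u g d : D) (ha : a ≠ 0) (hug : u * g = g * u)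
    (hxd : x * d = d * x) (hxa : x * a = Q • (a * x)) (hua : u * a = a * u + N • (x * d)) :
    u * (g * a⁻¹) = g * a⁻¹ * u - (N * Q⁻¹) • (g * a⁻¹ * (d * a⁻¹ * x)) := by
  have hx := inv_comm_aux Q hQ a x ha hxa
  have h1 : a⁻¹ * (u * a) * a⁻¹ = a⁻¹ * (a * u + N • (x * d)) * a⁻¹ := by rw [hua]
  have h2 : a⁻¹ * u = u * a⁻¹ + (N * Q⁻¹) • (a⁻¹ * (d * a⁻¹ * x)) := by
    calc a⁻¹ * u = a⁻¹ * (u * a) * a⁻¹ := by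
          rw [mul_assoc, mul_assoc u, mul_inv_cancel₀ ha, mul_one]
      _ = _ := by
          rw [h1, mul_add, inv_mul_cancel_left₀ ha, add_mul, mul_smul_comm, smul_mul_assoc,
            hxd, mul_assoc a⁻¹, mul_assoc d x, hx, mul_smul_comm, mul_smul_comm, smul_smul,
            mul_assoc d]
  rw [← mul_assoc, hug, mul_assoc, mul_assoc g a⁻¹ u, h2, mul_add, mul_smul_comm,
    mul_assoc g a⁻¹, add_sub_cancel_right]

theorem algH0 (Q N : K) (hQ : Q ≠ 0) (hN : N = Q - Q⁻¹) (a g d : D) (ha : a ≠ 0)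
    (hgd : g * d = Q • (d * g)) (hda : d * a = Q • (a * d)) :
    d * (g * a⁻¹) = g * a⁻¹ * d - (N * Q⁻¹) • (g * a⁻¹ * (d * a⁻¹ * a)) := by
  have hx := inv_comm_aux Q hQ a d ha hda
  have h1 : d * g = Q⁻¹ • (g * d) := by rw [hgd, smul_smul, inv_mul_cancel₀ hQ, one_smul]
  rw [← mul_assoc, h1, inv_mul_cancel_right₀ ha, smul_mul_assoc, mul_assoc g d, hx,
    mul_smul_comm, mul_assoc g, hN]
  match_scalars
  field_simp
  ring

theorem alg_minor (Q N κ s : K) (hQ : Q ≠ 0) (hN : N = Q - Q⁻¹) (x y u v c c' : D)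
    (hu : u * c = c * u - κ • (c * (c' * x)))
    (hv : v * c = c * v - κ • (c * (c' * y)))
    (hyx : y * x = Q • (x * y)) (hyu : y * u = u * y)
    (hvx : v * x - x * v = N • (y * u)) :
    u * (s • (c * y)) - Q⁻¹ • (v * (s • (c * x))) =
      ((-Q⁻¹ * s) • (c * x)) * v - Q⁻¹ • (((-Q⁻¹ * s) • (c * y)) * u) := by
  have hvx' : v * x = x * v + N • (y * u) := by rw [← hvx]; abel
  have e1 : u * (c * y) = c * (y * u) - κ • (c * (c' * (x * y))) := by
    rw [← mul_assoc, hu, sub_mul, smul_mul_assoc, hyu]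
    simp only [mul_assoc]
  have e2 : v * (c * x) = c * (x * v) + N • (c * (y * u)) - (κ * Q) • (c * (c' * (x * y))) := by
    rw [← mul_assoc, hv, sub_mul, smul_mul_assoc, mul_assoc c v, hvx', mul_assoc c, mul_assoc c',
      hyx]
    simp only [mul_add, mul_smul_comm, smul_smul]
  simp only [mul_smul_comm, smul_mul_assoc, e1, e2, mul_assoc, hN]
  match_scalars <;> field_simp <;> ring

theorem qmat_zero (Q N : K) (hQ : Q ≠ 0) (n : ℕ)
    (z : Fin (n + 2) → Fin (n + 2) → D) (h11 : z 0 0 ≠ 0)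
    (hrow : ∀ (i k l : Fin (n + 2)), k < l → z i l * z i k = Q • (z i k * z i l))
    (hcol : ∀ (i j k : Fin (n + 2)), i < j → z j k * z i k = Q • (z i k * z j k))
    (hsec : ∀ (i j k l : Fin (n + 2)), i < j → k < l → z i l * z j k = z j k * z i l)
    (hmain : ∀ (i j k l : Fin (n + 2)), i < j → k < l →
      z j l * z i k - z i k * z j l = N • (z i l * z j k))
    (i : Fin (n + 2)) (t : ℕ) (hti : t + 1 ≤ i.val) (hN : t = 0 ∨ N = Q - Q⁻¹) (s : K)
    (w : Fin (n + 2) → Fin (n + 2) → D)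
    (hw : ∀ r : Fin (n + 2), r.val < t + 1 → w r = z r)
    (hwt : ∀ r : Fin (n + 2), r.val = t + 1 → ∀ k, w r k = s • (z i 0 * (z 0 0)⁻¹ * z 0 k)) :
    qdet (algebraMap K D Q) w = 0 := by
  have hcen : ∀ x : D, algebraMap K D Q * x = x * algebraMap K D Q := fun x =>
    Algebra.commutes Q x
  have hi0 : (0 : Fin (n + 2)) < i := Fin.pos_of_ne_zero (by rintro rfl; simp at hti)
  induction t generalizing s w with
  | zero =>
    have hc : ∀ k, z 0 k * (z i 0 * (z 0 0)⁻¹) = Q⁻¹ • (z i 0 * (z 0 0)⁻¹ * z 0 k) := by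
      intro k
      rcases (Fin.eq_zero_or_eq_succ k).imp_right (fun h => (Fin.pos_of_ne_zero (by obtain ⟨x, rfl⟩ := h; exact Fin.succ_ne_zero x) : 0 < k)) with rfl | hk
      · rw [inv_mul_cancel_right₀ h11, ← mul_assoc]
        have := hcol 0 i 0 hi0
        have h2 : z 0 0 * z i 0 = Q⁻¹ • (z i 0 * z 0 0) := by
          rw [this, smul_smul, inv_mul_cancel₀ hQ, one_smul]
        rw [h2, smul_mul_assoc, mul_inv_cancel_right₀ h11]
      · rw [← mul_assoc, hsec 0 i 0 k hi0 hk, mul_assoc,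
          inv_comm_aux Q hQ _ _ h11 (hrow 0 0 k hk), mul_smul_comm, mul_assoc]
    rw [qdet_adj _ hcen w (Function.update w 1 0) 0 1 (by simp) ?_ ?_]
    · exact qdet_row_zero _ _ 1 (by simp)
    · intro r _ h1; simp [h1]
    · intro k l hkl
      have e0 : w 0 = z 0 := hw 0 (by simp)
      rw [hwt 1 (by simp), hwt 1 (by simp), e0, ← map_inv₀, ← Algebra.smul_def,
        ← Algebra.smul_def]
      simp only [mul_smul_comm, ← mul_assoc (z 0 _) (z i 0 * (z 0 0)⁻¹), hc]
      simp only [smul_mul_assoc, mul_assoc, hrow 0 k l hkl, Function.update_self, Pi.zero_apply,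
        mul_zero, smul_zero, sub_zero, mul_smul_comm]
      match_scalars
      field_simp
      ring
  | succ t ih =>
    have hN' : N = Q - Q⁻¹ := by simpa using hN
    have hti' : t + 2 < n + 2 := by omega
    let j : Fin (n + 2) := ⟨t + 1, by omega⟩
    let j' : Fin (n + 2) := ⟨t + 2, by omega⟩
    have hjj : j ≠ j' := by simp [j, j']
    have h0j : (0 : Fin (n + 2)) < j := by rw [Fin.lt_def]; simp [j]
    have hji : j < i := by rw [Fin.lt_def]; simp only [j]; omega
    let w' := Function.update (Function.update w j'  (z j)) j
      (fun k => (-Q⁻¹ * s) • (z i 0 * (z 0 0)⁻¹ * z 0 k))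
    have hH : ∀ k, z j k * (z i 0 * (z 0 0)⁻¹) = z i 0 * (z 0 0)⁻¹ * z j k -
        (N * Q⁻¹) • (z i 0 * (z 0 0)⁻¹ * (z j 0 * (z 0 0)⁻¹ * z 0 k)) := by
      intro k
      rcases (Fin.eq_zero_or_eq_succ k).imp_right (fun h => (Fin.pos_of_ne_zero (by obtain ⟨x, rfl⟩ := h; exact Fin.succ_ne_zero x) : 0 < k)) with rfl | hk
      · exact algH0 Q N hQ hN' _ _ _ h11 (hcol j i 0 hji) (hcol 0 j 0 h0j)
      · refine algH Q N hQ _ _ _ _ _ h11 (hsec j i 0 k hji hk) (hsec 0 j 0 k h0j hk)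
          (hrow 0 0 k hk) ?_
        rw [← hmain 0 j 0 k h0j hk]; abel
    rw [qdet_adj _ hcen w w' j j' (by simp [j, j']) ?_ ?_]
    · apply ih (by omega) (Or.inr hN') (-Q⁻¹ * s) w'
      · intro r hr
        have h1 : r ≠ j := by intro h; rw [h] at hr; simp [j] at hr
        have h2 : r ≠ j' := by intro h; rw [h] at hr; simp [j'] at hr
        simp only [w', Function.update_of_ne h1, Function.update_of_ne h2]
        exact hw r (by omega)
      · intro r hr k
        have : r = j := Fin.ext hr
        subst this
        simp [w']
    · intro r h1 h2
      simp only [w', Function.update_of_ne h1, Function.update_of_ne h2]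
    · intro k l hkl
      have e1 : w j = z j := hw j (by simp [j])
      have e2 : w' j' = z j := by
        simp only [w', Function.update_of_ne hjj.symm, Function.update_self]
      have e3 : ∀ k, w' j k = (-Q⁻¹ * s) • (z i 0 * (z 0 0)⁻¹ * z 0 k) := by
        intro k; simp only [w', Function.update_self]
      rw [hwt j' (by simp [j']), hwt j' (by simp [j']), e1, e2, e3, e3, ← map_inv₀,
        ← Algebra.smul_def, ← Algebra.smul_def]
      exact alg_minor Q N _ s hQ hN' _ _ _ _ _ _ (hH k) (hH l) (hrow 0 k l hkl)
        (hsec 0 j k l h0j hkl) (hmain 0 j k l h0j hkl)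

/-- In the non-standard-sign case the relations force degeneracy. -/
theorem alg_collapse (Q N : K) (hQ : Q ≠ 0) (hN : N = Q⁻¹ - Q) (hNN : N ≠ Q - Q⁻¹)
    (a b d e g h : D) (hg : g ≠ 0) (hb : b ≠ 0)
    (hha : h * a - a * h = N • (b * g)) (hda : d * a = Q • (a * d))
    (hhd : h * d - d * h = N • (e * g)) (hgd : g * d = Q • (d * g))
    (hbd : b * d = d * b) (hea : e * a - a * e = N • (b * d)) (hga : g * a = Q • (a * g)) :
    d = 0 := by
  have hha' : h * a = a * h + N • (b * g) := by rw [← hha]; abel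
  have hhd' : h * d = d * h + N • (e * g) := by rw [← hhd]; abel
  have hea' : e * a = a * e + N • (b * d) := by rw [← hea]; abel
  have e1 : h * (d * a) = Q • (a * (d * h)) + N • (b * (d * g)) + (N * Q) • (a * (e * g))
      + (N * N * Q) • (b * (d * g)) := by
    rw [← mul_assoc, hhd', add_mul, mul_assoc d, hha', mul_add, ← mul_assoc d a, hda,
      smul_mul_assoc, smul_mul_assoc, mul_assoc e, hga, mul_smul_comm, mul_smul_comm, ← mul_assoc d b,
      ← hbd, ← mul_assoc e a, hea', add_mul]
    simp only [smul_mul_assoc, mul_assoc, smul_add, smul_smul]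
    match_scalars <;> ring
  have e2 : h * (d * a) = Q • (a * (d * h)) + (N * Q) • (a * (e * g))
      + (Q * Q * N) • (b * (d * g)) := by
    rw [hda, mul_smul_comm, ← mul_assoc, hha', add_mul, mul_assoc a, hhd', smul_mul_assoc,
      mul_assoc b, hgd]
    simp only [mul_add, mul_smul_comm, smul_add, smul_smul]
    match_scalars <;> ring
  have e3 : (N * Q * (N - (Q - Q⁻¹))) • (b * (d * g)) = 0 := by
    have := e1.symm.trans e2
    rw [← sub_eq_zero] at this
    rw [← this]
    match_scalars <;> field_simp <;> ring
  have hN0 : N ≠ 0 := by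
    rintro rfl
    apply hNN
    have : Q - Q⁻¹ = -(Q⁻¹ - Q) := by ring
    rw [this, ← hN, neg_zero]
  rcases smul_eq_zero.1 e3 with h1 | h1
  · exact absurd h1 (mul_ne_zero (mul_ne_zero hN0 hQ) (sub_ne_zero.2 hNN))
  · simpa [hb, hg] using h1

theorem qmat_zero' (Q N : K) (hQ : Q ≠ 0) (hNd : N = Q⁻¹ - Q) (n : ℕ)
    (z : Fin (n + 2) → Fin (n + 2) → D) (h11 : z 0 0 ≠ 0)
    (hrow : ∀ (i k l : Fin (n + 2)), k < l → z i l * z i k = Q • (z i k * z i l))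
    (hcol : ∀ (i j k : Fin (n + 2)), i < j → z j k * z i k = Q • (z i k * z j k))
    (hsec : ∀ (i j k l : Fin (n + 2)), i < j → k < l → z i l * z j k = z j k * z i l)
    (hmain : ∀ (i j k l : Fin (n + 2)), i < j → k < l →
      z j l * z i k - z i k * z j l = N • (z i l * z j k))
    (i : Fin (n + 2)) (hi : i ≠ 0)
    (w : Fin (n + 2) → Fin (n + 2) → D)
    (hw : ∀ r : Fin (n + 2), r < i → w r = z r)
    (hwt : ∀ k, w i k = z i 0 * (z 0 0)⁻¹ * z 0 k) :
    qdet (algebraMap K D Q) w = 0 := by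
  have hi0 : (0 : Fin (n + 2)) < i := Fin.pos_of_ne_zero hi
  have hi0' : 0 < i.val := hi0
  have hap : (i.val - 1 = 0 ∨ N = Q - Q⁻¹) → qdet (algebraMap K D Q) w = 0 := by
    intro h
    refine qmat_zero Q N hQ n z h11 hrow hcol hsec hmain i (i.val - 1) (by omega) h 1 w ?_ ?_
    · intro r hr; exact hw r (by rw [Fin.lt_def]; omega)
    · intro r hr k
      have : r = i := Fin.ext (by omega)
      rw [this, hwt, one_smul]
  by_cases hs : N = Q - Q⁻¹
  · exact hap (Or.inr hs)
  by_cases hi1 : i.val - 1 = 0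
  · exact hap (Or.inl hi1)
  by_cases hg : z i 0 = 0
  · exact qdet_row_zero _ _ i (by intro k; simp [hwt, hg])
  by_cases hb : ∃ k, 0 < k ∧ z 0 k ≠ 0
  · obtain ⟨k, hk, hb⟩ := hb
    have h01 : (0 : Fin (n + 2)) < 1 := by simp
    have h1i : (1 : Fin (n + 2)) < i := by rw [Fin.lt_def]; simp; omega
    have hN0 : N ≠ 0 := by
      rintro rfl
      apply hs
      have : Q - Q⁻¹ = -(Q⁻¹ - Q) := by ring
      rw [this, ← hNd, neg_zero]
    have hd : z 1 0 = 0 := alg_collapse Q N hQ hNd hs (z 0 0) (z 0 k) (z 1 0) (z 1 k) (z i 0)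
      (z i k) hg hb (hmain 0 i 0 k hi0 hk) (hcol 0 1 0 h01) (hmain 1 i 0 k h1i hk)
      (hcol 1 i 0 h1i) (hsec 0 1 0 k h01 hk) (hmain 0 1 0 k h01 hk) (hcol 0 i 0 hi0)
    refine qdet_row_zero _ _ 1 ?_
    intro m
    rw [hw 1 h1i]
    rcases (Fin.eq_zero_or_eq_succ m).imp_right (fun h => (Fin.pos_of_ne_zero (by obtain ⟨x, rfl⟩ := h; exact Fin.succ_ne_zero x) : 0 < m)) with rfl | hm
    · exact hd
    · have := hmain 1 i 0 m h1i hm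
      rw [hd] at this
      simpa [hN0, hg] using this.symm
  · have hb' : ∀ k, k ≠ 0 → z 0 k = 0 := by
      intro k hk
      by_contra h
      exact hb ⟨k, Fin.pos_of_ne_zero hk, h⟩
    unfold qdet
    refine Finset.sum_eq_zero fun σ _ => ?_
    rw [List.prod_eq_zero, mul_zero]
    rw [List.mem_ofFn]
    by_cases h0 : σ 0 = 0
    · refine ⟨i, ?_⟩
      have : σ i ≠ 0 := by
        intro h; exact hi (σ.injective (h.trans h0.symm))
      simp [hwt, hb' _ this]
    · refine ⟨0, ?_⟩
      simp [hw 0 hi0, hb' _ h0]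

end alg

/-- **Row reducing the quantum determinant.**  The quantum determinant of the
row reduction `z'` of a quantum matrix `z` (with `z₁₁ ≠ 0`) equals the quantum
determinant of `z`. -/
theorem qdet_row_reduce {D : Type*} [DivisionRing D] (q : D)
    (hq : q ≠ 0) (hqc : ∀ x : D, q * x = x * q) (n : ℕ)
    (z : Fin (n + 2) → Fin (n + 2) → D)
    (hz : IsQuantumMatrix q z) (h11 : z 0 0 ≠ 0)
    (z' : Fin (n + 2) → Fin (n + 2) → D)
    (hz'1 : ∀ j, z' 0 j = z 0 j)
    (hz'c1 : ∀ i : Fin (n + 2), i ≠ 0 → z' i 0 = 0)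
    (hz'ij : ∀ i j : Fin (n + 2), i ≠ 0 → j ≠ 0 →
      z' i j = z i j - z i 0 * (z 0 0)⁻¹ * z 0 j) :
    qdet q z' = qdet q z := by
  obtain ⟨hrow, hcol, hsec, hmain⟩ := hz
  have hmem : q ∈ Subring.center D := by
    rw [Subring.mem_center_iff]; intro g; exact (hqc g).symm
  let Q : Subring.center D := ⟨q, hmem⟩
  have hQq : algebraMap (Subring.center D) D Q = q := rfl
  have hQ : Q ≠ 0 := by
    intro h; apply hq; rw [← hQq, h, map_zero]
  have hsm : ∀ x : D, Q • x = q * x := fun x => by rw [Algebra.smul_def, hQq]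
  have hsm' : ∀ x : D, (Q⁻¹ - Q) • x = (q⁻¹ - q) * x := fun x => by
    rw [Algebra.smul_def, map_sub, map_inv₀, hQq]
  have key : ∀ (i : Fin (n + 2)), i ≠ 0 → ∀ w : Fin (n + 2) → Fin (n + 2) → D,
      (∀ r : Fin (n + 2), r < i → w r = z r) →
      (∀ k, w i k = z i 0 * (z 0 0)⁻¹ * z 0 k) → qdet q w = 0 := by
    intro i hi w hw hwt
    rw [← hQq]
    refine qmat_zero' Q (Q⁻¹ - Q) hQ rfl n z h11 ?_ ?_ hsec ?_ i hi w hw hwt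
    · intro i k l h; rw [hsm]; exact hrow i k l h
    · intro i j k h; rw [hsm]; exact hcol i j k h
    · intro i j k l h h2; rw [hsm']; exact hmain i j k l h h2
  have hz' : ∀ i j, i ≠ 0 → z' i j = z i j - z i 0 * (z 0 0)⁻¹ * z 0 j := by
    intro i j hi
    by_cases hj : j = 0
    · subst hj
      rw [hz'c1 i hi, inv_mul_cancel_right₀ h11, sub_self]
    · exact hz'ij i j hi hj
  let M : ℕ → Fin (n + 2) → Fin (n + 2) → D := fun m r => if r.val < m then z r else z' r
  have hM : ∀ m, m + 1 ≤ n + 2 → qdet q (M (m + 1)) = qdet q z' := by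
    intro m
    induction m with
    | zero =>
      intro _
      congr 1
      funext r k
      by_cases h : r = 0
      · subst h; simp [M, hz'1]
      · have : ¬ r.val < 1 := by
          intro h1; apply h; apply Fin.ext; rw [Fin.val_zero]; omega
        simp [M, h]
    | succ m ih =>
      intro hm
      rw [← ih (by omega)]
      let i : Fin (n + 2) := ⟨m + 1, by omega⟩
      have hi : i ≠ 0 := by simp [i, Fin.ext_iff]
      have h0 := key i hi (Function.update (M (m + 1 + 1)) i
        (fun k => z i 0 * (z 0 0)⁻¹ * z 0 k)) ?_ ?_
      · have := qdet_sub_row q (M (m + 1)) (M (m + 1 + 1)) (Function.update (M (m + 1 + 1)) i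
          (fun k => z i 0 * (z 0 0)⁻¹ * z 0 k)) i ?_ ?_ ?_
        · rw [this, h0, sub_zero]
        · intro r hr
          have hr' : r.val ≠ m + 1 := fun h => hr (Fin.ext h)
          have : (r.val < m + 1) ↔ (r.val < m + 1 + 1) := by omega
          simp only [M, this]
        · intro r hr; rw [Function.update_of_ne hr]
        · intro k
          rw [Function.update_self]
          simp only [M, i, lt_self_iff_false, if_false, Nat.lt_succ_self, if_true]
          exact hz' i k hi
      · intro r hr
        rw [Function.update_of_ne hr.ne]
        have : r.val < m + 1 := hr
        have h2 : r.val < m + 1 + 1 := by omega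
        simp only [M, h2, if_true]
      · intro k; rw [Function.update_self]
  rw [← hM (n + 1) le_rfl]
  congr 1
  funext r
  simp only [M]
  rw [if_pos (by omega)]
end

section
/- Let D be a division ring, q a nonzero central element of D, and n ≥ 2. Let z = (z_{ij})_{1≤i,j≤n} be a quantum matrix over D with z_{11} ≠ 0, and let z'' be the (n−1)×(n−1) matrix with entries z''_{ij} = z_{ij} − z_{i1} z_{11}^{-1} z_{1j} for 2 ≤ i, j ≤ n. Then det_q(z) = z_{11} · det_q(z''). -/
section QAux

variable {D : Type*} [DivisionRing D] {N : ℕ}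

/-- creation operators -/
def qxi (q : D) (k : Fin N) : AddMonoid.End (Finset (Fin N) → D) where
  toFun f S := if k ∈ S then 0 else (-q⁻¹) ^ (S.filter (fun s => k < s)).card * f (insert k S)
  map_zero' := by ext S; simp
  map_add' f g := by ext S; by_cases h : k ∈ S <;> simp [h, mul_add]

/-- scalars -/
def qio (d : D) : AddMonoid.End (Finset (Fin N) → D) where
  toFun f S := d * f S
  map_zero' := by ext S; simp
  map_add' f g := by ext S; simp [mul_add]

/-- the one-form of a row -/
def qom (q : D) (v : Fin N → D) : AddMonoid.End (Finset (Fin N) → D) :=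
  ∑ k, qio (v k) * qxi q k

theorem qxi_apply (q : D) (k : Fin N) (f : Finset (Fin N) → D) (S : Finset (Fin N)) :
    qxi q k f S = if k ∈ S then 0
      else (-q⁻¹) ^ (S.filter (fun s => k < s)).card * f (insert k S) := rfl

theorem qio_apply (d : D) (f : Finset (Fin N) → D) (S : Finset (Fin N)) :
    qio d f S = d * f S := rfl

theorem qom_apply (q : D) (v : Fin N → D) (f : Finset (Fin N) → D) (S : Finset (Fin N)) :
    qom q v f S = ∑ k, v k * qxi q k f S :=
  (congrFun (AddMonoidHom.finsetSum_apply (fun k => qio (v k) * qxi q k) Finset.univ f) S).trans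
    (Finset.sum_apply S _ _)

theorem qmul_apply (A B : AddMonoid.End (Finset (Fin N) → D)) (f : Finset (Fin N) → D) :
    (A * B) f = A (B f) := rfl

theorem qio_mul (a b : D) : (qio (a * b) : AddMonoid.End (Finset (Fin N) → D)) = qio a * qio b := by
  ext f S; simp [qio_apply, mul_assoc]

theorem qio_sub (a b : D) : (qio (a - b) : AddMonoid.End (Finset (Fin N) → D)) = qio a - qio b := by
  ext f S
  exact sub_mul _ _ _

theorem qio_add (a b : D) : (qio (a + b) : AddMonoid.End (Finset (Fin N) → D)) = qio a + qio b := by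
  ext f S
  exact add_mul _ _ _

theorem qio_zero : (qio (0 : D) : AddMonoid.End (Finset (Fin N) → D)) = 0 := by
  ext f S; simp [qio_apply]

theorem q_comm (q : D) (hqc : ∀ x : D, q * x = x * q) (x : D) (m : ℕ) :
    x * (-q⁻¹) ^ m = (-q⁻¹) ^ m * x := by
  have h : Commute x q := (hqc x).symm
  exact ((h.inv_right₀).neg_right).pow_right m

theorem qxi_qio (q : D) (hqc : ∀ x : D, q * x = x * q) (k : Fin N) (d : D) :
    qxi q k * qio d = qio d * qxi q k := by
  ext f S
  simp only [qmul_apply, qio_apply, qxi_apply]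
  split_ifs
  · simp
  · rw [← mul_assoc, ← mul_assoc, q_comm q hqc]

theorem qxi_sq (q : D) (k : Fin N) : qxi q k * qxi q k = 0 := by
  ext f S
  simp [qmul_apply, qxi_apply]

theorem qxi_swap (q : D) (k l : Fin N) (hkl : k < l) :
    qxi q l * qxi q k = qio (-q⁻¹) * (qxi q k * qxi q l) := by
  ext f S
  simp only [qmul_apply, qxi_apply, qio_apply, Finset.mem_insert, hkl.ne, hkl.ne',
    false_or, Finset.filter_insert, hkl, hkl.not_gt, if_true, if_false]
  by_cases hk : k ∈ S
  · simp [hk]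
  by_cases hl : l ∈ S
  · simp [hl]
  simp only [hk, hl, if_false]
  rw [Finset.card_insert_of_notMem (by simp [hl]), Finset.insert_comm]
  simp only [← mul_assoc, ← pow_add, ← pow_succ']
  congr 2
  omega

theorem qsum_zero (q : D) (B : Fin N → Fin N → D)
    (hB : ∀ k l, k < l → B k l + B l k * (-q⁻¹) = 0) :
    ∑ k, ∑ l, qio (B k l) * (qxi q k * qxi q l) = 0 := by
  rw [← Finset.sum_product' (f := fun k l => qio (B k l) * (qxi q k * qxi q l))]
  have key : ∀ k l, k < l → qio (B k l) * (qxi q k * qxi q l)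
      + qio (B l k) * (qxi q l * qxi q k) = 0 := by
    intro k l h
    rw [qxi_swap q k l h, ← mul_assoc (qio (B l k)), ← qio_mul, ← add_mul, ← qio_add, hB k l h,
      qio_zero, zero_mul]
  refine Finset.sum_involution (fun a _ => a.swap) ?_ ?_ ?_ ?_
  · rintro ⟨k, l⟩ _
    rcases lt_trichotomy k l with h | h | h
    · exact key k l h
    · subst h; simp [qxi_sq]
    · rw [add_comm]; exact key l k h
  · rintro ⟨k, l⟩ _ hne heq
    simp only [Prod.swap_prod_mk, Prod.mk.injEq] at heq
    obtain ⟨h, -⟩ := heq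
    subst h
    exact hne (by simp [qxi_sq])
  · simp
  · simp

theorem qom_mul (q : D) (hqc : ∀ x : D, q * x = x * q) (v w : Fin N → D) :
    qom q v * qom q w = ∑ k, ∑ l, qio (v k * w l) * (qxi q k * qxi q l) := by
  simp only [qom, Finset.sum_mul_sum]
  refine Finset.sum_congr rfl fun k _ => Finset.sum_congr rfl fun l _ => ?_
  rw [qio_mul, mul_assoc, mul_assoc, ← mul_assoc (qxi q k), qxi_qio q hqc, mul_assoc]

theorem qom_qio (q : D) (hqc : ∀ x : D, q * x = x * q) (v : Fin N → D) (c d : D)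
    (h : ∀ k, v k * c = d * v k) : qom q v * qio c = qio d * qom q v := by
  simp only [qom, Finset.sum_mul, Finset.mul_sum]
  refine Finset.sum_congr rfl fun k _ => ?_
  rw [mul_assoc, qxi_qio q hqc, ← mul_assoc, ← mul_assoc, ← qio_mul, ← qio_mul, h]

theorem qio_qom (q : D) (v : Fin N → D) (c : D) :
    qio c * qom q v = qom q (fun k => c * v k) := by
  simp only [qom, Finset.mul_sum, qio_mul, mul_assoc]

theorem qom_sub (q : D) (v w : Fin N → D) :
    qom q (fun k => v k - w k) = qom q v - qom q w := by
  simp only [qom, qio_sub, sub_mul, Finset.sum_sub_distrib]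

/-- exponent of a sequence of columns -/
def qexp {m : ℕ} (S : Finset (Fin N)) (g : Fin m → Fin N) : ℕ :=
  (∑ i, (S.filter (fun s => g i < s)).card) + ∑ i, ∑ j, if i < j ∧ g j < g i then 1 else 0

theorem qexp_cons {m : ℕ} (S : Finset (Fin N)) (k : Fin N) (hk : k ∉ S) (g : Fin m → Fin N) :
    qexp S (Fin.cons k g : Fin (m + 1) → Fin N) =
      (S.filter (fun s => k < s)).card + qexp (insert k S) g := by
  have h : ∀ i, ((insert k S).filter (fun s => g i < s)).card =
      (S.filter (fun s => g i < s)).card + if g i < k then 1 else 0 := by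
    intro i
    rw [Finset.filter_insert]
    split_ifs with h
    · rw [Finset.card_insert_of_notMem (by simp [hk])]
    · simp
  simp only [qexp, Fin.sum_univ_succ, Fin.cons_zero, Fin.cons_succ, h, Finset.sum_add_distrib]
  simp
  ring

open Classical in
theorem qprod_apply (q : D) (hqc : ∀ x : D, q * x = x * q) (m : ℕ) :
    ∀ (v : Fin m → Fin N → D) (S : Finset (Fin N)),
    (List.ofFn fun i => qom q (v i)).prod (fun _ => 1) S =
      ∑ g : Fin m → Fin N, (if Function.Injective g ∧ ∀ i, g i ∉ S then
        (-q⁻¹) ^ qexp S g * (List.ofFn fun i => v i (g i)).prod else 0) := by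
  induction m with
  | zero => intro v S; simp [qexp, Function.injective_of_subsingleton]
  | succ m ih =>
    intro v S
    rw [List.ofFn_succ, List.prod_cons, qmul_apply,
      ← (Fin.consEquiv (fun _ : Fin (m + 1) => Fin N)).sum_comp, Fintype.sum_prod_type]
    rw [qom_apply]
    refine Finset.sum_congr rfl fun k _ => ?_
    rw [qxi_apply, ih (fun i => v i.succ) (insert k S)]
    by_cases hk : k ∈ S
    · simp [hk, Fin.forall_fin_succ, Fin.consEquiv]
    · simp only [hk, if_false, Finset.mul_sum]
      refine Finset.sum_congr rfl fun g _ => ?_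
      simp only [Fin.consEquiv, Equiv.coe_fn_mk, Fin.cons_injective_iff, Fin.forall_fin_succ,
        Fin.cons_zero, Fin.cons_succ, hk, not_false_eq_true, true_and, List.ofFn_succ,
        List.prod_cons, qexp_cons S k hk, Finset.mem_insert, not_or, Set.mem_range, not_exists]
      by_cases h : Function.Injective g ∧ ∀ i, ¬ g i = k ∧ g i ∉ S
      · rw [if_pos h, if_pos ⟨⟨fun i => (h.2 i).1, h.1⟩, fun i => (h.2 i).2⟩, pow_add]
        simp only [← mul_assoc]
        rw [mul_assoc (v 0 k), ← pow_add, q_comm q hqc]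
      · rw [if_neg h, if_neg (fun h' => h ⟨h'.1.2, fun i => ⟨h'.1.1 i, h'.2 i⟩⟩)]
        simp

theorem inversions_eq {n : ℕ} (σ : Equiv.Perm (Fin n)) :
    inversions σ = ∑ i, ∑ j, if i < j ∧ σ j < σ i then 1 else 0 := by
  rw [inversions, Finset.card_filter, Fintype.sum_prod_type]

theorem qdet_eq_prod (q : D) (hqc : ∀ x : D, q * x = x * q) (v : Fin N → Fin N → D) :
    qdet q v = (List.ofFn fun i => qom q (v i)).prod (fun _ => 1) ∅ := by
  classical
  rw [qprod_apply q hqc, qdet]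
  refine Finset.sum_of_injOn (fun σ => ⇑σ) ?_ ?_ ?_ ?_
  · intro a _ b _ h; exact DFunLike.coe_injective h
  · simp
  · intro g _ hg
    rw [if_neg]
    rintro ⟨h, -⟩
    exact hg ⟨Equiv.ofBijective g (Finite.injective_iff_bijective.1 h), by simp, rfl⟩
  · intro σ _
    simp [σ.injective, qexp, inversions_eq]

theorem qdet_minor (q : D) {n : ℕ} (v : Fin (n + 1) → Fin (n + 1) → D)
    (h0 : ∀ i : Fin n, v i.succ 0 = 0) (hqc : ∀ x : D, q * x = x * q) :
    qdet q v = v 0 0 * qdet q (fun i j : Fin n => v i.succ j.succ) := by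
  classical
  rw [qdet, qdet, Finset.mul_sum]
  symm
  refine Finset.sum_of_injOn (fun τ => Equiv.Perm.decomposeFin.symm (0, τ)) ?_ ?_ ?_ ?_
  · intro a _ b _ h
    simpa using h
  · simp
  · intro σ _ hσ
    have hne : σ 0 ≠ 0 := by
      intro h
      apply hσ
      refine ⟨(Equiv.Perm.decomposeFin σ).2, by simp, ?_⟩
      have : (Equiv.Perm.decomposeFin σ).1 = 0 := by
        rw [← h]
        conv_rhs => rw [← Equiv.Perm.decomposeFin.symm_apply_apply σ]
        rw [← Equiv.Perm.decomposeFin_symm_apply_zero (Equiv.Perm.decomposeFin σ).1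
          (Equiv.Perm.decomposeFin σ).2]
      show Equiv.Perm.decomposeFin.symm (0, (Equiv.Perm.decomposeFin σ).2) = σ
      rw [← this]
      exact Equiv.Perm.decomposeFin.symm_apply_apply σ
    have hz : (List.ofFn fun i => v i (σ i)).prod = 0 := by
      rw [List.prod_eq_zero_iff, List.mem_ofFn]
      obtain ⟨j, hj⟩ := σ.surjective 0
      have hj0 : j ≠ 0 := by rintro rfl; exact hne hj
      obtain ⟨i, rfl⟩ := Fin.exists_succ_eq.2 hj0
      exact ⟨i.succ, by simp [hj, h0]⟩
    rw [hz, mul_zero]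
  · intro τ _
    rw [inversions_eq, inversions_eq]
    simp only [Fin.sum_univ_succ, List.ofFn_succ, List.prod_cons,
      Equiv.Perm.decomposeFin_symm_apply_zero, Equiv.Perm.decomposeFin_symm_apply_succ]
    simp only [← mul_assoc]
    rw [q_comm q hqc]
    simp

theorem list_pass {R : Type*} [Ring R] (w : R) (L : List R)
    (h : ∀ x ∈ L, ∃ y, x * w = w * y) : ∃ y, L.prod * w = w * y := by
  induction L with
  | nil => exact ⟨1, by simp⟩
  | cons x L ih =>
    obtain ⟨y, hy⟩ := ih (fun a ha => h a (List.mem_cons_of_mem _ ha))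
    obtain ⟨y', hy'⟩ := h x List.mem_cons_self
    exact ⟨y' * y, by rw [List.prod_cons, mul_assoc, hy, ← mul_assoc, hy', mul_assoc]⟩

end QAux

theorem q_degen {D : Type*} [DivisionRing D] (q t : D) (hqc : ∀ x : D, q * x = x * q)
    (htc : ∀ x : D, t * x = x * t) (a b c d e f : D)
    (hba : b * a = q * (a * b)) (hca : c * a = q * (a * c)) (hcb : c * b = q * (b * c))
    (hbd : b * d = d * b) (hea : e * a = a * e + t * (b * d))
    (hfa : f * a = a * f + t * (c * d)) (hfb : f * b = b * f + t * (c * e)) :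
    t * (1 + q * t - q * q) * (b * c * d) = 0 := by
  have lq : ∀ x y : D, x * (q * y) = q * (x * y) := fun x y => by
    rw [← mul_assoc, ← hqc, mul_assoc]
  have lt : ∀ x y : D, x * (t * y) = t * (x * y) := fun x y => by
    rw [← mul_assoc, ← htc, mul_assoc]
  have h1 : f * (b * a) = q * (a * (b * f)) + q * (t * (a * (c * e)))
      + q * (t * (q * (b * (c * d)))) := by
    rw [hba, lq, ← mul_assoc f, hfa, add_mul, mul_assoc a, hfb, mul_assoc t, mul_assoc c, ← hbd,
      ← mul_assoc c, hcb, mul_add, mul_add, mul_add, lt a, mul_assoc q (b * c), mul_assoc b]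
  have h2 : f * b * a = q * (a * (b * f)) + t * (b * (c * d)) + (t * (q * (a * (c * e)))
      + t * (t * (q * (b * (c * d))))) := by
    rw [hfb, add_mul, mul_assoc b, hfa, mul_add, ← mul_assoc b a, hba, mul_assoc q, mul_assoc a,
      lt b, mul_assoc t, mul_assoc c, hea, mul_add, ← mul_assoc c a, hca, mul_add, lt c,
      ← mul_assoc c b, hcb]
    simp only [mul_assoc]
  have h3 := (mul_assoc f b a).symm.trans h2
  rw [h1] at h3
  simp only [lq t] at h3
  simp only [mul_sub, sub_mul, mul_add, add_mul, mul_assoc, mul_one, one_mul, lq t]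
  have h4 := sub_eq_zero.2 h3
  rw [← neg_eq_zero, ← h4]
  abel

theorem q_degen' {D : Type*} [DivisionRing D] (q : D) (hq : q ≠ 0) (hqc : ∀ x : D, q * x = x * q)
    (h2 : (2 : D) ≠ 0) (ht : q⁻¹ - q ≠ 0) (a b c d e f : D)
    (hba : b * a = q * (a * b)) (hca : c * a = q * (a * c)) (hcb : c * b = q * (b * c))
    (hbd : b * d = d * b) (hea : e * a - a * e = (q⁻¹ - q) * (b * d))
    (hfa : f * a - a * f = (q⁻¹ - q) * (c * d)) (hfb : f * b - b * f = (q⁻¹ - q) * (c * e))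
    (hb : b ≠ 0) (hc : c ≠ 0) (hd : d ≠ 0) : False := by
  have htc : ∀ x : D, (q⁻¹ - q) * x = x * (q⁻¹ - q) := fun x => by
    have h : Commute q x := hqc x
    exact (h.inv_left₀.sub_left h)
  have h := q_degen q (q⁻¹ - q) hqc htc a b c d e f hba hca hcb hbd (by rw [← hea]; abel)
    (by rw [← hfa]; abel) (by rw [← hfb]; abel)
  have h5 : 1 + q * (q⁻¹ - q) - q * q = 2 * (q * (q⁻¹ - q)) := by
    rw [mul_sub, mul_inv_cancel₀ hq, two_mul]; abel
  rw [h5] at h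
  exact mul_ne_zero (mul_ne_zero ht (mul_ne_zero h2 (mul_ne_zero hq ht)))
    (mul_ne_zero (mul_ne_zero hb hc) hd) h

/-- If `z` is an `n × n` quantum matrix (`n ≥ 2`) with `z₁₁ ≠ 0` and `z''` is
the `(n-1) × (n-1)` matrix with entries `z''ᵢⱼ = zᵢⱼ - zᵢ₁ z₁₁⁻¹ z₁ⱼ`
(`2 ≤ i, j ≤ n`), then `det_q(z) = z₁₁ · det_q(z'')`. -/
theorem qdet_eq_z11_mul_qdet_reduced {D : Type*} [DivisionRing D] (q : D)
    (hq : q ≠ 0) (hqc : ∀ x : D, q * x = x * q) (n : ℕ)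
    (z : Fin (n + 2) → Fin (n + 2) → D)
    (hz : IsQuantumMatrix q z) (h11 : z 0 0 ≠ 0) :
    qdet q z =
      z 0 0 * qdet q (fun i j : Fin (n + 1) =>
        z i.succ j.succ - z i.succ 0 * (z 0 0)⁻¹ * z 0 j.succ) := by
  obtain ⟨hr, hc, hs, hm⟩ := hz
  have hqi : ∀ x : D, q⁻¹ * x = x * q⁻¹ := fun x => (show Commute q x from hqc x).inv_left₀
  have lq : ∀ x y : D, x * (q * y) = q * (x * y) := fun x y => by
    rw [← mul_assoc, ← hqc, mul_assoc]
  have lqi : ∀ x y : D, x * (q⁻¹ * y) = q⁻¹ * (x * y) := fun x y => by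
    rw [← mul_assoc, ← hqi, mul_assoc]
  have qq : ∀ x : D, q⁻¹ * (q * x) = x := fun x => inv_mul_cancel_left₀ hq x
  have qq' : ∀ x : D, q * (q⁻¹ * x) = x := fun x => mul_inv_cancel_left₀ hq x
  set a := z 0 0 with ha
  -- the corrected main diagonal relation
  have H : ∀ i m : Fin (n + 1), i < m → z m.succ 0 ≠ 0 → ∀ r s : Fin (n + 2), r < s →
      z i.succ s * z 0 r = z 0 r * z i.succ s + (q - q⁻¹) * (z 0 s * z i.succ r) := by
    intro i m him hm0 r s hrs
    have h1 := hm 0 i.succ r s (Fin.succ_pos i) hrs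
    have h1' : z i.succ s * z 0 r = z 0 r * z i.succ s + (q⁻¹ - q) * (z 0 s * z i.succ r) := by
      rw [← h1]; abel
    by_cases ht : q⁻¹ - q = 0
    · rw [h1', ht, ← neg_sub, ht, neg_zero]
    by_cases h2 : (2 : D) = 0
    · have : q - q⁻¹ = q⁻¹ - q := by
        rw [← sub_eq_zero]
        have : q - q⁻¹ - (q⁻¹ - q) = 2 * (q - q⁻¹) := by rw [two_mul]; abel
        rw [this, h2, zero_mul]
      rw [h1', this]
    by_cases hs0 : z 0 s = 0
    · rw [h1', hs0]; simp
    by_cases hr0 : z i.succ r = 0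
    · rw [h1', hr0]; simp
    exfalso
    have him' : i.succ < m.succ := Fin.succ_lt_succ_iff.2 him
    rcases Fin.eq_zero_or_eq_succ r with rfl | ⟨r, rfl⟩
    · exact q_degen' q hq hqc h2 ht (z 0 0) (z i.succ 0) (z m.succ 0) (z 0 s) (z i.succ s)
        (z m.succ s) (hc _ _ _ (Fin.succ_pos _)) (hc _ _ _ (Fin.succ_pos _)) (hc _ _ _ him')
        (hs _ _ _ _ (Fin.succ_pos _) hrs).symm
        (by rw [← hs _ _ _ _ (Fin.succ_pos _) hrs]; exact hm _ _ _ _ (Fin.succ_pos _) hrs)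
        (by rw [← hs _ _ _ _ (Fin.succ_pos _) hrs]; exact hm _ _ _ _ (Fin.succ_pos _) hrs)
        (by rw [← hs _ _ _ _ him' hrs]; exact hm _ _ _ _ him' hrs)
        hr0 hm0 hs0
    · have hr1 : z 0 r.succ ≠ 0 := by
        intro h
        rw [h] at h1
        simp [ht, hs0, hr0] at h1
      have hp := Fin.succ_pos r
      have hp' := hp.trans hrs
      have hpm := Fin.succ_pos m
      exact q_degen' q hq hqc h2 ht (z 0 0) (z 0 r.succ) (z 0 s) (z m.succ 0) (z m.succ r.succ)
        (z m.succ s) (hr _ _ _ hp) (hr _ _ _ hp') (hr _ _ _ hrs)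
        (hs _ _ _ _ hpm hp) (hm _ _ _ _ hpm hp) (hm _ _ _ _ hpm hp') (hm _ _ _ _ hpm hrs)
        hr1 hs0 hm0
  let v : Fin (n + 1) → Fin (n + 2) → D := fun i j => z i.succ j - z i.succ 0 * a⁻¹ * z 0 j
  have hv0 : ∀ i, v i 0 = 0 := fun i => by simp [v, ← ha, h11]
  have h0a : ∀ k : Fin (n + 1), a⁻¹ * z 0 k.succ = q * (z 0 k.succ * a⁻¹) := by
    intro k
    have := hr 0 0 k.succ (Fin.succ_pos k)
    rw [inv_mul_eq_iff_eq_mul₀ h11, lq, ← mul_assoc, ← mul_assoc, mul_assoc q, ← this, mul_assoc,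
      mul_inv_cancel₀ h11, mul_one]
  have hma : ∀ m : Fin (n + 1), a⁻¹ * z m.succ 0 = q * (z m.succ 0 * a⁻¹) := by
    intro m
    have := hc 0 m.succ 0 (Fin.succ_pos m)
    rw [inv_mul_eq_iff_eq_mul₀ h11, lq, ← mul_assoc, ← mul_assoc, mul_assoc q, ← this, mul_assoc,
      mul_inv_cancel₀ h11, mul_one]
  have ham : ∀ m : Fin (n + 1), a * z m.succ 0 = q⁻¹ * (z m.succ 0 * a) := by
    intro m
    rw [hc 0 m.succ 0 (Fin.succ_pos m), qq]
  have F1 : ∀ (m : Fin (n + 1)) k, z 0 k * (z m.succ 0 * a⁻¹) =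
      (q⁻¹ * (z m.succ 0 * a⁻¹)) * z 0 k := by
    intro m k
    rcases Fin.eq_zero_or_eq_succ k with rfl | ⟨k, rfl⟩
    · rw [← ha, ← mul_assoc, ham]
      simp [mul_assoc, h11]
    · rw [← mul_assoc, hs 0 m.succ 0 k.succ (Fin.succ_pos _) (Fin.succ_pos _), mul_assoc, mul_assoc,
        mul_assoc (z m.succ 0) a⁻¹, h0a, lq, qq]
  have F2 : ∀ i m : Fin (n + 1), i < m → z m.succ 0 ≠ 0 → ∀ k,
      v i k * (z m.succ 0 * a⁻¹) = (z m.succ 0 * a⁻¹) * v i k := by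
    intro i m him hm0 k
    rcases Fin.eq_zero_or_eq_succ k with rfl | ⟨k, rfl⟩
    · simp [hv0]
    have him' : i.succ < m.succ := Fin.succ_lt_succ_iff.2 him
    have hk := Fin.succ_pos k
    have c1 : Commute (v i k.succ) (z m.succ 0) := by
      have e1 : Commute (z i.succ k.succ) (z m.succ 0) := hs _ _ _ _ him' hk
      have e2 : Commute (z 0 k.succ) (z m.succ 0) := hs _ _ _ _ (Fin.succ_pos _) hk
      have e3 : Commute (z i.succ 0 * a⁻¹) (z m.succ 0) := by
        show _ * _ = _ * _
        rw [mul_assoc, hma, lq, ← mul_assoc (z i.succ 0), ← mul_assoc q, ← hc _ _ _ him', mul_assoc]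
      exact e1.sub_left (e3.mul_left e2)
    have c2 : Commute (v i k.succ) a := by
      show _ * _ = _ * _
      simp only [v]
      rw [sub_mul, mul_sub, H i m him hm0 0 k.succ hk, mul_assoc (z i.succ 0 * a⁻¹),
        hr 0 0 k.succ hk, lq, ← mul_assoc a, ← mul_assoc a (z i.succ 0), ham,
        hs 0 i.succ 0 k.succ (Fin.succ_pos _) hk, sub_mul]
      simp [mul_assoc, h11, ← ha]
      abel
    exact c1.mul_right c2.inv_right₀
  have F3 : qom q (z 0) * qom q (z 0) = 0 := by
    rw [qom_mul q hqc]
    refine qsum_zero q _ fun k l hkl => ?_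
    rw [hr 0 k l hkl, mul_neg, ← hqi, qq, add_neg_cancel]
  have F4 : ∀ i m : Fin (n + 1), i < m → z m.succ 0 ≠ 0 →
      qom q (z i.succ) * qom q (z 0) = qom q (z 0) * qom q (fun k => -q⁻¹ * z i.succ k) := by
    intro i m him hm0
    rw [← sub_eq_zero, qom_mul q hqc, qom_mul q hqc]
    simp only [← Finset.sum_sub_distrib, ← sub_mul, ← qio_sub]
    refine qsum_zero q _ fun k l hkl => ?_
    rw [H i m him hm0 k l hkl, ← hs 0 i.succ k l (Fin.succ_pos _) hkl]
    simp only [neg_mul, mul_neg, sub_neg_eq_add, ← hqi, lqi, mul_add, sub_mul, mul_sub, qq]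
    abel
  have hVsub : ∀ i, qom q (v i) = qom q (z i.succ) - qio (z i.succ 0 * a⁻¹) * qom q (z 0) := by
    intro i
    rw [qio_qom, ← qom_sub]
  have key : ∀ L : List (Fin (n + 1)), L.Pairwise (· < ·) →
      qom q (z 0) * (L.map fun i => qom q (v i)).prod =
      qom q (z 0) * (L.map fun i => qom q (z i.succ)).prod := by
    intro L
    induction L using List.reverseRecOn with
    | nil => intro _; rfl
    | append_singleton L m ih =>
      intro hL
      rw [List.pairwise_append] at hL
      obtain ⟨hL1, -, hL2⟩ := hL
      have hlt : ∀ i ∈ L, i < m := fun i hi => hL2 i hi m (by simp)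
      have ih := ih hL1
      simp only [List.map_append, List.prod_append, List.map_cons, List.map_nil, List.prod_cons,
        List.prod_nil, mul_one]
      rw [← mul_assoc, ← mul_assoc, ← ih, hVsub m, mul_sub, sub_eq_self]
      by_cases hm0 : z m.succ 0 = 0
      · simp [hm0, qio_zero]
      have hcomm : Commute (L.map fun i => qom q (v i)).prod (qio (z m.succ 0 * a⁻¹)) := by
        refine Commute.list_prod_left _ _ ?_
        intro x hx
        obtain ⟨i, hi, rfl⟩ := List.mem_map.1 hx
        exact qom_qio q hqc _ _ _ (F2 i m (hlt i hi) hm0)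
      obtain ⟨y, hy⟩ := list_pass (qom q (z 0)) (L.map fun i => qom q (v i)) (by
        intro x hx
        obtain ⟨i, hi, rfl⟩ := List.mem_map.1 hx
        refine ⟨qom q (fun k => -q⁻¹ * z i.succ k), ?_⟩
        show qom q (v i) * _ = _
        rw [hVsub i, sub_mul, mul_assoc, F3, mul_zero, sub_zero]
        exact F4 i m (hlt i hi) hm0)
      rw [mul_assoc, ← mul_assoc _ (qio _), hcomm.eq, mul_assoc (qio _), hy, ← mul_assoc (qom q (z 0)),
        qom_qio q hqc _ _ _ (F1 m), mul_assoc, ← mul_assoc (qom q (z 0)), F3, zero_mul, mul_zero]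
  have hfin := key (List.finRange (n + 1)) (List.pairwise_lt_finRange _)
  rw [← List.ofFn_eq_map, ← List.ofFn_eq_map] at hfin
  have hmin := qdet_minor q (Fin.cons (z 0) v : Fin (n + 2) → Fin (n + 2) → D)
    (fun i => by simpa using hv0 i) hqc
  simp only [Fin.cons_zero, Fin.cons_succ] at hmin
  rw [← ha] at hmin
  have hsplit : ∀ w : Fin (n + 2) → Fin (n + 2) → D, qdet q w =
      (qom q (w 0) * (List.ofFn fun i => qom q (w (Fin.succ i))).prod) (fun _ => 1) ∅ := by
    intro w
    rw [qdet_eq_prod q hqc, List.ofFn_succ, List.prod_cons]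
  rw [← hmin, hsplit, hsplit]
  simp only [Fin.cons_zero, Fin.cons_succ]
  rw [hfin]
end
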